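/- Let R be a commutative ring, x_1,...,x_d, y_1,...,y_d elements with (y) ⊆ (x), and A, B two matrices of coefficients expressing the y_i in terms of the x_j. Then det A − det B ∈ (y_1,...,y_d)^lim; consequently multiplication by det A and multiplication by det B induce the same map R/(x)^lim → R/(y)^lim. -/

import Mathlib

/-!
Replacing the rows of `B` by those of `A` one at a time reduces the claim to two coefficient
matrices that differ in a single row `i`. By multilinearity the difference of their determinants is
`det C`, where `C x` is the vector `y` with `i`-th entry replaced by `0`. Cramer's rule puts
`det C * x j`, hence `det C * y i`, in the ideal generated by the `y k` with `k ≠ i`. Multiplying by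
`∏ k ≠ i, y k` gives `(∏ k, y k) * det C ∈ (y k ^ 2 : k)`. Thus the exponent `t = 2` works for every
step, and therefore for the whole telescoping sum.
-/

/-- The limit closure of a finite sequence `y` in a commutative ring:
`(y)^lim = ⋃_{t ≥ 1} ((y_1^t, …, y_n^t) : (y_1 ⋯ y_n)^{t-1})`. -/
def limClosure {R : Type*} [CommRing R] {n : ℕ} (y : Fin n → R) : Set R :=
  {r : R | ∃ t : ℕ, 1 ≤ t ∧
    (∏ i, y i) ^ (t - 1) * r ∈ Ideal.span (Set.range fun i => y i ^ t)}

/-- Cramer's rule for a coefficient matrix whose `i`-th row is a syzygy of `x`; `a` is any row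
expressing `y i` in terms of `x`. -/
lemma prod_mul_det_mem {R : Type*} [CommRing R] {d : ℕ} (x y a : Fin d → R)
    (C : Matrix (Fin d) (Fin d) R) (i : Fin d) (ha : y i = ∑ j, a j * x j)
    (hi : (C.mulVec x) i = 0) (hk : ∀ k, k ≠ i → (C.mulVec x) k = y k) :
    (∏ k, y k) * C.det ∈ Ideal.span (Set.range fun k => y k ^ 2) := by
  have cramer : ∀ j, C.det * x j = ∑ k, C.adjugate j k * (C.mulVec x) k := by
    intro j
    have h : (C.adjugate.mulVec (C.mulVec x)) j = C.det * x j := by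
      rw [Matrix.mulVec_mulVec, Matrix.adjugate_mul, Matrix.smul_mulVec, Matrix.one_mulVec]
      simp
    rw [← h]
    rfl
  have key : (∏ k, y k) * C.det
      = ∑ j, a j * ∑ k, C.adjugate j k *
          ((∏ l ∈ Finset.univ.erase i, y l) * (C.mulVec x) k) := by
    calc (∏ k, y k) * C.det
        = (∏ l ∈ Finset.univ.erase i, y l) * (y i * C.det) := by
          rw [← Finset.mul_prod_erase Finset.univ y (Finset.mem_univ i)]
          ring
      _ = ∑ j, a j * ((∏ l ∈ Finset.univ.erase i, y l) * (C.det * x j)) := by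
          rw [ha, Finset.sum_mul, Finset.mul_sum]
          exact Finset.sum_congr rfl fun j _ => by ring
      _ = _ := by
          refine Finset.sum_congr rfl fun j _ => ?_
          rw [cramer, Finset.mul_sum]
          congr 1
          exact Finset.sum_congr rfl fun k _ => by ring
  rw [key]
  refine Ideal.sum_mem _ fun j _ => Ideal.mul_mem_left _ _ <|
    Ideal.sum_mem _ fun k _ => Ideal.mul_mem_left _ _ ?_
  by_cases hki : k = i
  · subst hki
    simp [hi]
  · rw [hk k hki, ← Finset.mul_prod_erase (Finset.univ.erase i) y
      (Finset.mem_erase.2 ⟨hki, Finset.mem_univ k⟩), mul_comm (y k), mul_assoc, ← pow_two]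
    exact Ideal.mul_mem_left _ _ (Ideal.subset_span ⟨k, rfl⟩)

/-- The matrix with rows of `A` at the indices in `s` and rows of `B` elsewhere. -/
def hybridRows {R : Type*} {d : ℕ} (A B : Matrix (Fin d) (Fin d) R) (s : Finset (Fin d)) :
    Matrix (Fin d) (Fin d) R :=
  fun i => if i ∈ s then A i else B i

lemma hybridRows_mulVec {R : Type*} [CommRing R] {d : ℕ}
    (x y : Fin d → R) (A B : Matrix (Fin d) (Fin d) R)
    (hA : ∀ i, y i = ∑ j, A i j * x j) (hB : ∀ i, y i = ∑ j, B i j * x j)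
    (s : Finset (Fin d)) (k : Fin d) : ((hybridRows A B s).mulVec x) k = y k := by
  simp only [Matrix.mulVec, dotProduct, hybridRows]
  split_ifs
  · exact (hA k).symm
  · exact (hB k).symm

lemma prod_mul_hybridRows_det_sub_mem {R : Type*} [CommRing R] {d : ℕ}
    (x y : Fin d → R) (A B : Matrix (Fin d) (Fin d) R)
    (hA : ∀ i, y i = ∑ j, A i j * x j) (hB : ∀ i, y i = ∑ j, B i j * x j)
    (s : Finset (Fin d)) :
    (∏ k, y k) * ((hybridRows A B s).det - B.det) ∈
      Ideal.span (Set.range fun k => y k ^ 2) := by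
  induction s using Finset.induction_on with
  | empty =>
    have h : hybridRows A B ∅ = B := by
      funext i
      simp [hybridRows]
    simp [h]
  | insert i s hi ih =>
    set M := hybridRows A B s with hM
    have h1 : hybridRows A B (insert i s) = M.updateRow i ((A i - B i) + B i) := by
      funext k
      by_cases h : k = i
      · subst h
        simp [hybridRows]
      · simp [hybridRows, hM, h]
    have h2 : M.updateRow i (B i) = M := by
      have : M i = B i := by simp [hM, hybridRows, hi]
      rw [← this, Matrix.updateRow_eq_self]
    have h3 := prod_mul_det_mem x y (A i) (M.updateRow i (A i - B i)) i (hA i)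
      (by
        simp only [Matrix.mulVec, Matrix.updateRow_self, sub_dotProduct]
        exact sub_eq_zero.2 ((hA i).symm.trans (hB i)))
      (fun k hk => by
        rw [← hybridRows_mulVec x y A B hA hB s k]
        simp only [Matrix.mulVec, Matrix.updateRow_ne hk, hM])
    rw [h1, Matrix.det_updateRow_add, h2, add_sub_assoc, mul_add]
    exact Ideal.add_mem _ h3 ih

/-- two matrices of coefficients expressing `y` in terms of `x`
have determinants differing by an element of `(y)^lim`; hence they induce the
same map `R/(x)^lim → R/(y)^lim`. -/
theorem stmt2 {R : Type*} [CommRing R] {d : ℕ}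
    (x y : Fin d → R) (A B : Matrix (Fin d) (Fin d) R)
    (hxy : Ideal.span (Set.range y) ≤ Ideal.span (Set.range x))
    (hA : ∀ i, y i = ∑ j, A i j * x j)
    (hB : ∀ i, y i = ∑ j, B i j * x j) :
    A.det - B.det ∈ limClosure y := by
  refine ⟨2, by norm_num, ?_⟩
  have h := prod_mul_hybridRows_det_sub_mem x y A B hA hB Finset.univ
  have hU : hybridRows A B Finset.univ = A := by
    funext i
    simp [hybridRows]
  simpa [hU] using h
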